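/- RR_3(10,9) = 477. That is, 477 is the least positive integer N such that every 2-coloring χ of {1,…,N} admits x, y, z ∈ {1,…,N} with 3x + 10y = z and χ(x) = χ(y) = χ(z) = 0, or x, y, z ∈ {1,…,N} with 3x + 9y = z and χ(x) = χ(y) = χ(z) = 1. -/

import Mathlib

/-!
For the lower bound, give color `0` to the block `[t + s, (t + q)(t + s))` and color `1` to
everything else. Two elements of the block produce a `z` beyond the block; two elements below the
block produce a `z` inside it; and a color-`1` solution using an element beyond the block has
`z ≥ t(t + q)(t + s) + s`, which is `477` for `(t, q, s) = (3, 10, 9)`.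

For the upper bound, each solution `(x, y, z)` of either equation rules out one color for its three
entries, so two entries of that color force the other color on the third. Propagating forced colors
from the color of `1` and, if that is `0`, from the color of `3`, ends in a contradiction.
-/

/-- The coloring `χ` admits a solution of `a x + b y = z` in `{1, …, N}` that is monochromatic of
color `c`. The coloring is a function on all of `ℕ`, of which only the values on `{1, …, N}`
matter. -/
def HasMonochromaticSolution {κ : Type*} (a b N : ℕ) (χ : ℕ → κ) (c : κ) : Prop :=
  ∃ x y z : ℕ, x ∈ Finset.Icc 1 N ∧ y ∈ Finset.Icc 1 N ∧ z ∈ Finset.Icc 1 N ∧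
    a * x + b * y = z ∧ χ x = c ∧ χ y = c ∧ χ z = c

/-- The coloring `χ` witnesses `N < RR_t(q, s)`: on `{1, …, N}` it has neither a solution of
`t x + q y = z` of color `0` nor a solution of `t x + s y = z` of color `1`. -/
structure IsAvoidingColoring (t q s N : ℕ) (χ : ℕ → Fin 2) : Prop where
  not_zero : ¬ HasMonochromaticSolution t q N χ 0
  not_one : ¬ HasMonochromaticSolution t s N χ 1

theorem ne_or_ne_or_ne_of_not_hasMonochromaticSolution {κ : Type*} {a b N : ℕ}
    [NeZero a] [NeZero b] {χ : ℕ → κ} {c : κ} (h : ¬ HasMonochromaticSolution a b N χ c) {x y : ℕ}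
    (hx : 0 < x) (hy : 0 < y) (hz : a * x + b * y ≤ N) :
    χ x ≠ c ∨ χ y ≠ c ∨ χ (a * x + b * y) ≠ c := by
  by_contra! hc
  have hxz : x ≤ a * x := Nat.le_mul_of_pos_left x (NeZero.pos a)
  have hyz : y ≤ b * y := Nat.le_mul_of_pos_left y (NeZero.pos b)
  refine h ⟨x, y, _, ?_, ?_, ?_, rfl, hc⟩ <;> rw [Finset.mem_Icc] <;> omega

section LowerBound

/-- The coloring with color `0` on the block `[l, u)` and color `1` elsewhere. -/
def blockColoring (l u n : ℕ) : Fin 2 :=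
  if l ≤ n ∧ n < u then 0 else 1

theorem blockColoring_eq_zero_iff {l u n : ℕ} : blockColoring l u n = 0 ↔ l ≤ n ∧ n < u := by
  simp [blockColoring]

theorem blockColoring_eq_one_iff {l u n : ℕ} : blockColoring l u n = 1 ↔ n < l ∨ u ≤ n := by
  simp only [blockColoring, ite_eq_right_iff, zero_ne_one, imp_false]
  omega

theorem not_hasMonochromaticSolution_blockColoring_zero (a b l N : ℕ) :
    ¬ HasMonochromaticSolution a b N (blockColoring l ((a + b) * l)) 0 := by
  rintro ⟨x, y, z, -, -, -, rfl, hx, hy, hz⟩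
  rw [blockColoring_eq_zero_iff] at hx hy hz
  have hle : (a + b) * l ≤ a * x + b * y := calc
    (a + b) * l = a * l + b * l := add_mul a b l
    _ ≤ a * x + b * y := by gcongr <;> omega
  omega

theorem not_hasMonochromaticSolution_blockColoring_one {a b u N : ℕ} (hab : a ≤ b)
    (hu : (a + b) * (a + b) ≤ u) (hN : N < a * u + b) :
    ¬ HasMonochromaticSolution a b N (blockColoring (a + b) u) 1 := by
  rintro ⟨x, y, z, hxN, hyN, hzN, rfl, hx, hy, hz⟩
  rw [Finset.mem_Icc] at hxN hyN hzN
  rw [blockColoring_eq_one_iff] at hx hy hz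
  have le_z : a + b ≤ a * x + b * y :=
    add_le_add (Nat.le_mul_of_pos_right a hxN.1) (Nat.le_mul_of_pos_right b hyN.1)
  rcases hx with hx | hx
  · rcases hy with hy | hy
    · have z_lt : a * x + b * y < u := by nlinarith
      omega
    · have z_large : a * u + b ≤ a * x + b * y := by
        obtain ⟨d, rfl⟩ := Nat.exists_eq_add_of_le hab
        calc a * u + (a + d) = a * u + (a * 1 + d * 1) := by ring
          _ ≤ a * y + (a * x + d * y) := by gcongr <;> omega
          _ = a * x + (a + d) * y := by ring
      omega
  · have z_large : a * u + b ≤ a * x + b * y :=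
      add_le_add (Nat.mul_le_mul_left a hx) (Nat.le_mul_of_pos_right b hyN.1)
    omega

theorem isAvoidingColoring_blockColoring {t q s N : ℕ} (hts : t ≤ s) (hsq : s ≤ q)
    (hN : N < t * ((t + q) * (t + s)) + s) :
    IsAvoidingColoring t q s N (blockColoring (t + s) ((t + q) * (t + s))) where
  not_zero := not_hasMonochromaticSolution_blockColoring_zero t q (t + s) N
  not_one := not_hasMonochromaticSolution_blockColoring_one hts (by gcongr) hN

end LowerBound

namespace IsAvoidingColoring

section ForcedColors

variable {t q s N : ℕ} {χ : ℕ → Fin 2} [NeZero t]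

theorem eq_one_or [NeZero q] (hχ : IsAvoidingColoring t q s N χ) (x y : ℕ)
    (h : 0 < x ∧ 0 < y ∧ t * x + q * y ≤ N := by omega) :
    χ x = 1 ∨ χ y = 1 ∨ χ (t * x + q * y) = 1 := by
  have := ne_or_ne_or_ne_of_not_hasMonochromaticSolution hχ.not_zero h.1 h.2.1 h.2.2
  omega

theorem eq_zero_or [NeZero s] (hχ : IsAvoidingColoring t q s N χ) (x y : ℕ)
    (h : 0 < x ∧ 0 < y ∧ t * x + s * y ≤ N := by omega) :
    χ x = 0 ∨ χ y = 0 ∨ χ (t * x + s * y) = 0 := by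
  have := ne_or_ne_or_ne_of_not_hasMonochromaticSolution hχ.not_one h.1 h.2.1 h.2.2
  omega

end ForcedColors

section UpperBound

variable {N : ℕ} {χ : ℕ → Fin 2}

theorem apply_one_eq_zero (hχ : IsAvoidingColoring 3 10 9 N χ) (hN : 477 ≤ N) : χ 1 = 0 := by
  by_contra h
  have h1 : χ 1 = 1 := by omega
  have h12 : χ 12 = 0 := by simpa [h1] using hχ.eq_zero_or 1 1
  have h156 : χ 156 = 1 := by simpa [h12] using hχ.eq_one_or 12 12
  have h477 : χ 477 = 0 := by simpa [h156, h1] using hχ.eq_zero_or 156 1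
  have h49 : χ 49 = 0 := by simpa [h1, h156] using hχ.eq_zero_or 49 1
  have h33 : χ 33 = 1 := by simpa [h49, h477] using hχ.eq_one_or 49 33
  have h396 : χ 396 = 0 := by simpa [h33] using hχ.eq_zero_or 33 33
  have h36 : χ 36 = 1 := by simpa [h12, h396] using hχ.eq_one_or 12 36
  have h117 : χ 117 = 0 := by simpa [h36, h1] using hχ.eq_zero_or 36 1
  have h9 : χ 9 = 1 := by simpa [h117] using hχ.eq_one_or 9 9
  simpa [h9, h1, h36] using hχ.eq_zero_or 9 1

theorem apply_three_eq_one (hχ : IsAvoidingColoring 3 10 9 N χ) (hN : 462 ≤ N) (h1 : χ 1 = 0) :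
    χ 3 = 1 := by
  by_contra h
  have h3 : χ 3 = 0 := by omega
  have h13 : χ 13 = 1 := by simpa [h1] using hχ.eq_one_or 1 1
  have h156 : χ 156 = 0 := by simpa [h13] using hχ.eq_zero_or 13 13
  have h12 : χ 12 = 1 := by simpa [h156] using hχ.eq_one_or 12 12
  have h144 : χ 144 = 0 := by simpa [h12] using hχ.eq_zero_or 12 12
  have h462 : χ 462 = 1 := by simpa [h144, h3] using hχ.eq_one_or 144 3
  have h19 : χ 19 = 1 := by simpa [h3, h1] using hχ.eq_one_or 3 1
  have h165 : χ 165 = 0 := by simpa [h19, h12] using hχ.eq_zero_or 19 12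
  have h45 : χ 45 = 1 := by simpa [h3, h165] using hχ.eq_one_or 45 3
  simpa [h19, h45, h462] using hχ.eq_zero_or 19 45

theorem apply_three_eq_zero (hχ : IsAvoidingColoring 3 10 9 N χ) (hN : 471 ≤ N) (h1 : χ 1 = 0) :
    χ 3 = 0 := by
  by_contra h
  have h3 : χ 3 = 1 := by omega
  have h36 : χ 36 = 0 := by simpa [h3] using hχ.eq_zero_or 3 3
  have h13 : χ 13 = 1 := by simpa [h1] using hχ.eq_one_or 1 1
  have h118 : χ 118 = 1 := by simpa [h36, h1] using hχ.eq_one_or 36 1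
  have h471 : χ 471 = 0 := by simpa [h118, h13] using hχ.eq_zero_or 118 13
  have h37 : χ 37 = 1 := by simpa [h36, h471] using hχ.eq_one_or 37 36
  have h363 : χ 363 = 1 := by simpa [h1, h36] using hχ.eq_one_or 1 36
  have h28 : χ 28 = 0 := by simpa [h37, h363] using hχ.eq_zero_or 37 28
  have h444 : χ 444 = 1 := by simpa [h28, h36] using hχ.eq_one_or 28 36
  simpa [h37, h444] using hχ.eq_zero_or 37 37

theorem lt_477 (hχ : IsAvoidingColoring 3 10 9 N χ) : N < 477 := by
  by_contra! hN
  have h1 : χ 1 = 0 := hχ.apply_one_eq_zero hN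
  have h3 : χ 3 = 0 := hχ.apply_three_eq_zero (by omega) h1
  have h3' : χ 3 = 1 := hχ.apply_three_eq_one (by omega) h1
  exact zero_ne_one (h3.symm.trans h3')

end UpperBound

end IsAvoidingColoring

/-- `RR_3(10,9) = 477`: the least positive `N` such that every 2-coloring of
`{1,…,N}` admits a solution to `3x + 10y = z` monochromatic of color 0 or a
solution to `3x + 9y = z` monochromatic of color 1 is `477`. -/
theorem RR_3_10_9 :
    IsLeast {N : ℕ | 0 < N ∧ ∀ χ : ℕ → Fin 2,
      (∃ x y z : ℕ, x ∈ Finset.Icc 1 N ∧ y ∈ Finset.Icc 1 N ∧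
        z ∈ Finset.Icc 1 N ∧ 3 * x + 10 * y = z ∧ χ x = 0 ∧ χ y = 0 ∧ χ z = 0) ∨
      (∃ x y z : ℕ, x ∈ Finset.Icc 1 N ∧ y ∈ Finset.Icc 1 N ∧
        z ∈ Finset.Icc 1 N ∧ 3 * x + 9 * y = z ∧ χ x = 1 ∧ χ y = 1 ∧ χ z = 1)}
      477 := by
  refine ⟨⟨by norm_num, fun χ => ?_⟩, fun N ⟨_, hN⟩ => ?_⟩
  · by_contra h
    obtain ⟨not_zero, not_one⟩ := not_or.mp h
    exact lt_irrefl 477 (IsAvoidingColoring.lt_477 (χ := χ) ⟨not_zero, not_one⟩)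
  · by_contra! hlt
    have block : IsAvoidingColoring 3 10 9 N (blockColoring 12 156) :=
      isAvoidingColoring_blockColoring (by norm_num) (by norm_num) hlt
    exact (hN (blockColoring 12 156)).elim block.not_zero block.not_one
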